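/- arXiv:math/0104131 — 3 statements merged into one kernel-verified Lean document; each statement's English description precedes it below -/
import Mathlib

section
/- Let m be a positive integer. Then for every function x : ℕ → ℚ, I_m(x) = I_{2m}(y) + (1/2)·I_m(z), where y : ℕ → ℚ is defined by y(r) := 0 for odd r and y(r) := x(r/2) for even r, and z : ℕ → ℚ is defined by z(r) := x(r) for odd r and z(r) := 0 for even r. -/
open Finset

/-- Cycle index of the regular cyclic group of order `n`:
`I_n(x) = (1/n) * ∑_{r | n} φ(r) * x(r)^(n/r)`. -/
def cycleIndex (n : ℕ) (x : ℕ → ℚ) : ℚ :=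
  (1 / (n : ℚ)) * ∑ r ∈ n.divisors, (Nat.totient r : ℚ) * x r ^ (n / r)

/-- The sum over the divisors of `2 * m` of a function vanishing at the odd divisors. -/
theorem sum_divisors_two_mul_of_odd_eq_zero {M : Type*} [AddCommMonoid M] {m : ℕ} (hm : m ≠ 0)
    (f : ℕ → M) (hf : ∀ r ∈ (2 * m).divisors, Odd r → f r = 0) :
    ∑ r ∈ (2 * m).divisors, f r = ∑ d ∈ m.divisors, f (2 * d) := by
  symm
  rw [← Finset.sum_image (f := f) (g := fun d => 2 * d)
    fun a _ b _ h => Nat.eq_of_mul_eq_mul_left two_pos h]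
  refine Finset.sum_subset (fun r hr => ?_) fun r hr hr' => hf r hr ?_
  · obtain ⟨d, hd, rfl⟩ := Finset.mem_image.1 hr
    exact Nat.mem_divisors.2
      ⟨Nat.mul_dvd_mul_left 2 (Nat.dvd_of_mem_divisors hd), mul_ne_zero two_ne_zero hm⟩
  · by_contra h
    obtain ⟨d, rfl⟩ := (Nat.not_odd_iff_even.1 h).two_dvd
    exact hr' (Finset.mem_image_of_mem _ (Nat.mem_divisors.2
      ⟨Nat.dvd_of_mul_dvd_mul_left two_pos (Nat.dvd_of_mem_divisors hr), hm⟩))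

/-- `I_m(x) = I_{2m}(y) + (1/2)·I_m(z)`, where `y(r) = 0` for odd `r`,
`y(r) = x(r/2)` for even `r`; `z(r) = x(r)` for odd `r`, `z(r) = 0` for even `r`. -/
theorem cycleIndex_eq_cycleIndex_two_mul_add_half (m : ℕ) (hm : 0 < m) (x : ℕ → ℚ) :
    cycleIndex m x =
      cycleIndex (2 * m) (fun r => if Odd r then 0 else x (r / 2)) +
        (1 / 2) * cycleIndex m (fun r => if Odd r then x r else 0) := by
  have hm' : (m : ℚ) ≠ 0 := Nat.cast_ne_zero.2 hm.ne'
  have div_ne_zero {n r : ℕ} (hr : r ∈ n.divisors) : n / r ≠ 0 :=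
    (Nat.div_pos (Nat.divisor_le hr) (Nat.pos_of_mem_divisors hr)).ne'
  unfold cycleIndex
  rw [sum_divisors_two_mul_of_odd_eq_zero hm.ne' _ fun r hr hodd => by
    simp [hodd, div_ne_zero hr]]
  simp only [Finset.mul_sum, ← Finset.sum_add_distrib]
  refine Finset.sum_congr rfl fun d hd => ?_
  have hnot : ¬ Odd (2 * d) := Nat.not_odd_iff_even.2 (even_two_mul d)
  rw [if_neg hnot, Nat.mul_div_cancel_left d two_pos, Nat.mul_div_mul_left m d two_pos]
  rcases Nat.even_or_odd d with heven | hodd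
  · rw [if_neg (Nat.not_odd_iff_even.2 heven), zero_pow (div_ne_zero hd),
      Nat.totient_two_mul_of_even heven]
    push_cast
    field_simp
    ring
  · rw [if_pos hodd, Nat.totient_two_mul_of_odd hodd]
    push_cast
    field_simp
    ring
end

section
/- For every odd prime p, C_sd(p) = C_t(p) + C_su(p); that is, the number of self-complementary directed circulant graphs of prime order p equals the number of circulant tournaments of order p plus the number of self-complementary undirected circulant graphs of order p. -/
open Finset

/-- Number of self-complementary directed circulant graphs of odd prime order `p`:
`C_sd(p) = (1/(p-1))·∑_{r | p-1, r even} φ(r)·2^{(p-1)/r}`. -/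
def Csd (p : ℕ) : ℚ :=
  (1 / ((p : ℚ) - 1)) *
    ∑ r ∈ (p - 1).divisors.filter (fun r => Even r),
      (Nat.totient r : ℚ) * (2 : ℚ) ^ ((p - 1) / r)

/-- Number of self-complementary undirected circulant graphs of odd prime order `p`:
`C_su(p) = (2/(p-1))·∑_{r | (p-1)/2, r even} φ(r)·2^{(p-1)/(2r)}`. -/
def Csu (p : ℕ) : ℚ :=
  (2 / ((p : ℚ) - 1)) *
    ∑ r ∈ ((p - 1) / 2).divisors.filter (fun r => Even r),
      (Nat.totient r : ℚ) * (2 : ℚ) ^ ((p - 1) / (2 * r))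

/-- Number of circulant tournaments of odd prime order `p`:
`C_t(p) = (1/(p-1))·∑_{r | p-1, r odd} φ(r)·2^{(p-1)/(2r)}`. -/
def Ct (p : ℕ) : ℚ :=
  (1 / ((p : ℚ) - 1)) *
    ∑ r ∈ (p - 1).divisors.filter (fun r => Odd r),
      (Nat.totient r : ℚ) * (2 : ℚ) ^ ((p - 1) / (2 * r))

/-- A sum over the even divisors of `2 * m` is a sum over the divisors of `m`. -/
theorem sum_even_divisors_two_mul {M : Type*} [AddCommMonoid M] (m : ℕ) (f : ℕ → M) :
    ∑ r ∈ (2 * m).divisors.filter (fun r => Even r), f r = ∑ s ∈ m.divisors, f (2 * s) := by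
  symm
  refine sum_bij (fun s _ => 2 * s) ?_ ?_ ?_ ?_
  · intro s hs
    rw [Nat.mem_divisors] at hs
    simp only [mem_filter, Nat.mem_divisors, even_two_mul, and_true]
    exact ⟨mul_dvd_mul_left 2 hs.1, by lia⟩
  · intro a _ b _ h
    exact Nat.eq_of_mul_eq_mul_left two_pos h
  · intro r hr
    obtain ⟨hr, heven⟩ := mem_filter.mp hr
    obtain ⟨s, rfl⟩ := heven.two_dvd
    rw [Nat.mem_divisors] at hr
    exact ⟨s, Nat.mem_divisors.mpr ⟨Nat.dvd_of_mul_dvd_mul_left two_pos hr.1, by lia⟩, rfl⟩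
  · intro _ _
    rfl

/-- The odd divisors of `2 * m` are the odd divisors of `m`. -/
theorem filter_odd_divisors_two_mul (m : ℕ) :
    (2 * m).divisors.filter (fun r => Odd r) = m.divisors.filter (fun r => Odd r) := by
  ext r
  simp only [mem_filter, Nat.mem_divisors, mul_ne_zero_iff]
  refine ⟨fun ⟨⟨hdvd, _, hm⟩, hr⟩ => ⟨⟨?_, hm⟩, hr⟩,
    fun ⟨⟨hdvd, hm⟩, hr⟩ => ⟨⟨hdvd.mul_left 2, two_ne_zero, hm⟩, hr⟩⟩
  exact (Nat.coprime_two_right.mpr hr).dvd_of_dvd_mul_left hdvd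

/-- For every odd prime `p`, `C_sd(p) = C_t(p) + C_su(p)`. -/
theorem Csd_eq_Ct_add_Csu (p : ℕ) (hp : p.Prime) (hodd : Odd p) :
    Csd p = Ct p + Csu p := by
  obtain ⟨m, rfl⟩ := hodd
  unfold Csd Ct Csu
  rw [Nat.add_sub_cancel, Nat.mul_div_cancel_left m two_pos, sum_even_divisors_two_mul,
    filter_odd_divisors_two_mul, ← sum_filter_add_sum_filter_not m.divisors (fun r => Odd r),
    mul_add]
  simp only [Nat.not_odd_iff_even]
  congr 1
  · congr 1
    refine sum_congr rfl fun r hr => ?_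
    rw [Nat.totient_two_mul_of_odd (mem_filter.mp hr).2]
  · rw [mul_sum, mul_sum]
    refine sum_congr rfl fun r hr => ?_
    rw [Nat.totient_two_mul_of_even (mem_filter.mp hr).2, Nat.cast_mul, Nat.cast_ofNat]
    ring
end

section
/- Let p > 3 be a prime such that q = (p+1)/2 is also prime, and write p − 1 = 2^{k+1}·p̃ with p̃ odd (here k ≥ 1 since 4 divides p − 1). Then for every z ∈ ℚ, 2·(1+z)·c_u(p, z) = c_u(p+1, z) + (1+z)·c̄_u(2p̃+1, z^{2^k}). -/
open Finset

/-- Generating function by valency for undirected circulant graphs of odd prime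
order `p`: `c_u(p,z) = (2/(p-1))·∑_{r | (p-1)/2} φ(r)·(1+z^{2r})^{(p-1)/(2r)}`. -/
def cUPrime (p : ℕ) (z : ℚ) : ℚ :=
  (2 / ((p : ℚ) - 1)) *
    ∑ r ∈ ((p - 1) / 2).divisors,
      (Nat.totient r : ℚ) * (1 + z ^ (2 * r)) ^ ((p - 1) / (2 * r))

/-- Generating function by valency for undirected circulant graphs of order `2q`,
`q` an odd prime:
`c_u(2q,z) = (1+z)·(2/(q-1))·∑_{r | (q-1)/2} φ(r)·(1+z^{2r})^{(q-1)/r}`. -/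
def cUTwicePrime (q : ℕ) (z : ℚ) : ℚ :=
  (1 + z) * ((2 / ((q : ℚ) - 1)) *
    ∑ r ∈ ((q - 1) / 2).divisors,
      (Nat.totient r : ℚ) * (1 + z ^ (2 * r)) ^ ((q - 1) / r))

/-- For odd `p̃`, `c̄_u(2p̃+1, w) = (1/p̃)·∑_{r | p̃} φ(r)·(1+w^{2r})^{p̃/r}`
(the formula counting undirected circulants of order `2p̃+1` when that is prime). -/
def cUBar (pt : ℕ) (w : ℚ) : ℚ :=
  (1 / (pt : ℚ)) *
    ∑ r ∈ pt.divisors, (Nat.totient r : ℚ) * (1 + w ^ (2 * r)) ^ (pt / r)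

/-- The divisors of `2 ^ (j + 1) * m`, `m` odd, split into those of `2 ^ j * m` and the
multiples by `2 ^ (j + 1)` of those of `m`. -/
theorem Nat.sum_divisors_two_pow_succ_mul {M : Type*} [AddCommMonoid M] {m : ℕ} (hm : Odd m)
    (j : ℕ) (f : ℕ → M) :
    ∑ r ∈ (2 ^ (j + 1) * m).divisors, f r =
      ∑ r ∈ (2 ^ j * m).divisors, f r + ∑ s ∈ m.divisors, f (2 ^ (j + 1) * s) := by
  have hm0 : m ≠ 0 := hm.pos.ne'
  have hinj : Set.InjOn (fun s => 2 ^ (j + 1) * s) (m.divisors : Set ℕ) :=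
    fun a _ b _ hab => Nat.eq_of_mul_eq_mul_left (by positivity) hab
  have hdisj : Disjoint (2 ^ j * m).divisors (m.divisors.image fun s => 2 ^ (j + 1) * s) := by
    rw [Finset.disjoint_left]
    intro r hr hr'
    obtain ⟨s, -, rfl⟩ := Finset.mem_image.mp hr'
    have hdvd : 2 ^ j * (2 * s) ∣ 2 ^ j * m := by
      rw [← mul_assoc, ← pow_succ]
      exact Nat.dvd_of_mem_divisors hr
    have htwo : 2 ∣ m :=
      (Dvd.intro s rfl).trans (Nat.dvd_of_mul_dvd_mul_left (by positivity) hdvd)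
    exact hm.not_two_dvd_nat htwo
  have hunion : (2 ^ (j + 1) * m).divisors =
      (2 ^ j * m).divisors ∪ m.divisors.image fun s => 2 ^ (j + 1) * s := by
    ext r
    simp only [Finset.mem_union, Finset.mem_image, Nat.mem_divisors]
    constructor
    · rintro ⟨hr, -⟩
      obtain ⟨a, b, ha, hb, rfl⟩ := Nat.dvd_mul.mp hr
      obtain ⟨i, hi, rfl⟩ := (Nat.dvd_prime_pow Nat.prime_two).mp ha
      rcases hi.lt_or_eq with hlt | rfl
      · exact Or.inl ⟨mul_dvd_mul (pow_dvd_pow 2 (Nat.lt_succ_iff.mp hlt)) hb, by positivity⟩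
      · exact Or.inr ⟨b, ⟨hb, hm0⟩, rfl⟩
    · rintro (⟨hr, -⟩ | ⟨s, ⟨hs, -⟩, rfl⟩)
      · exact ⟨hr.trans (mul_dvd_mul_right (pow_dvd_pow 2 j.le_succ) m), by positivity⟩
      · exact ⟨mul_dvd_mul_left _ hs, by positivity⟩
  rw [hunion, Finset.sum_union hdisj, Finset.sum_image hinj]

/-- If `p > 3` and `q = (p+1)/2` are both prime and `p - 1 = 2^{k+1}·p̃` with `p̃`
odd (`k ≥ 1`), then `2·(1+z)·c_u(p,z) = c_u(p+1,z) + (1+z)·c̄_u(2p̃+1, z^{2^k})`. -/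
theorem two_mul_cU (p q k pt : ℕ) (hp : p.Prime) (hp3 : 3 < p)
    (hq : q.Prime) (hpq : p + 1 = 2 * q) (hk : 1 ≤ k) (hpt : Odd pt)
    (hfac : p - 1 = 2 ^ (k + 1) * pt) (z : ℚ) :
    2 * (1 + z) * cUPrime p z = cUTwicePrime q z + (1 + z) * cUBar pt (z ^ 2 ^ k) := by
  obtain ⟨j, rfl⟩ : ∃ j, k = j + 1 := ⟨k - 1, by omega⟩
  have hpt0 : (pt : ℚ) ≠ 0 := by exact_mod_cast hpt.pos.ne'
  have hp1 : p - 1 = 2 * (2 ^ (j + 1) * pt) := by rw [hfac]; ring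
  have hq1 : q - 1 = 2 * (2 ^ j * pt) := by
    have : 2 * (2 ^ (j + 1) * pt) = 2 * (2 * (2 ^ j * pt)) := by ring
    omega
  have hpQ : (p : ℚ) - 1 = 2 * (2 ^ (j + 1) * pt) := by
    rw [← Nat.cast_pred hp.pos, hp1]
    push_cast
    ring
  have hqQ : (q : ℚ) - 1 = 2 * (2 ^ j * pt) := by
    rw [← Nat.cast_pred hq.pos, hq1]
    push_cast
    ring
  have hexp : ∀ r, (p - 1) / (2 * r) = (q - 1) / r := fun r => by
    rw [← Nat.div_div_eq_div_mul]
    congr 1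
    omega
  have htop : ∀ s ∈ pt.divisors,
      (Nat.totient (2 ^ (j + 1) * s) : ℚ) *
          (1 + z ^ (2 * (2 ^ (j + 1) * s))) ^ ((q - 1) / (2 ^ (j + 1) * s)) =
        2 ^ j * ((Nat.totient s : ℚ) * (1 + (z ^ 2 ^ (j + 1)) ^ (2 * s)) ^ (pt / s)) := by
    intro s hs
    have hcop : Nat.Coprime (2 ^ (j + 1)) s :=
      (Nat.coprime_two_left.mpr (hpt.of_dvd_nat (Nat.dvd_of_mem_divisors hs))).pow_left _
    have hdiv : (q - 1) / (2 ^ (j + 1) * s) = pt / s := by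
      rw [hq1, ← mul_assoc, ← pow_succ', Nat.mul_div_mul_left _ _ (by positivity)]
    rw [Nat.totient_mul hcop, Nat.totient_prime_pow_succ Nat.prime_two, hdiv, ← pow_mul,
      mul_left_comm 2 (2 ^ (j + 1)) s]
    push_cast
    ring
  unfold cUPrime cUTwicePrime cUBar
  simp only [hexp]
  rw [show (p - 1) / 2 = 2 ^ (j + 1) * pt by omega, show (q - 1) / 2 = 2 ^ j * pt by omega,
    Nat.sum_divisors_two_pow_succ_mul hpt, Finset.sum_congr rfl htop, ← Finset.mul_sum, hpQ, hqQ]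
  field_simp
  ring
end
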